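/- Let T be a compactly generated triangulated category and S a full triangulated subcategory of T that is closed under coproducts and contains a set of compact generators of T. Then S = T. -/

import Mathlib

/-!
Statement 5 (Neeman, dévissage): if `S` is a full triangulated subcategory of a
compactly generated triangulated category `T` that is closed under coproducts and
contains a set of compact generators of `T`, then `S = T`.
-/

namespace LadderFormalization

open CategoryTheory Category Limits Pretriangulated Opposite

universe v u

variable {T : Type u} [Category.{v} T] [HasZeroObject T] [HasShift T ℤ] [Preadditive T]
  [∀ n : ℤ, (shiftFunctor T n).Additive] [Pretriangulated T]

/-- An object `X` is compact if `Hom(X, -)` (as a functor to abelian groups) preserves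
all small coproducts. -/
def IsCompactObj (X : T) : Prop :=
  ∀ J : Type v, PreservesColimitsOfShape (Discrete J) (preadditiveCoyoneda.obj (op X))

/-- A set of objects of a pretriangulated category is a (strictly full) triangulated
subcategory. -/
structure IsTriangulatedSub (S : Set T) : Prop where
  iso_mem : ∀ ⦃X Y : T⦄, (X ≅ Y) → X ∈ S → Y ∈ S
  zero_mem : ∀ ⦃Z : T⦄, IsZero Z → Z ∈ S
  shift_mem : ∀ (n : ℤ) ⦃X : T⦄, X ∈ S → X⟦n⟧ ∈ S
  ext_mem : ∀ (Tr : Triangle T), Tr ∈ (distTriang T) → Tr.obj₁ ∈ S → Tr.obj₃ ∈ S →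
    Tr.obj₂ ∈ S

/-- A class of objects is closed under (small) coproducts. -/
def CoproductClosed (S : Set T) : Prop :=
  ∀ (J : Type v) (f : J → T), (∀ j, f j ∈ S) →
    ∀ (c : Cofan f), IsColimit c → c.pt ∈ S

/-- Elementary form of compactness. -/
def ElemCompact (P : T) : Prop :=
  ∀ (J : Type v) (f : J → T) (c : Cofan f) (_ : IsColimit c) (g : P ⟶ c.pt),
    g ∈ AddSubgroup.closure {x : P ⟶ c.pt | ∃ (j : J) (h : P ⟶ f j), x = h ≫ c.inj j}

lemma IsCompactObj.elem {P : T} (hP : IsCompactObj P) : ElemCompact P := by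
  intro J f c hc g
  have := hP J
  let H := AddSubgroup.closure {x : P ⟶ c.pt | ∃ (j : J) (h : P ⟶ f j), x = h ≫ c.inj j}
  have hc' := isColimitOfPreserves (preadditiveCoyoneda.obj (op P)) hc
  let q : (preadditiveCoyoneda.obj (op P)).obj c.pt ⟶ AddCommGrpCat.of ((P ⟶ c.pt) ⧸ H) :=
    AddCommGrpCat.ofHom (QuotientAddGroup.mk' H)
  have hq : q = 0 := by
    refine hc'.hom_ext ?_
    rintro ⟨j⟩
    ext h
    have hm : ((show P ⟶ f j from h) ≫ c.inj j) ∈ H :=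
      AddSubgroup.subset_closure ⟨j, h, rfl⟩
    exact (QuotientAddGroup.eq_zero_iff _).2 hm
  have h2 : QuotientAddGroup.mk' H g = 0 := by
    have := congrArg (fun k => k.hom g) hq
    exact this
  exact (QuotientAddGroup.eq_zero_iff _).1 h2

lemma ElemCompact.of_iso {P Q : T} (e : P ≅ Q) (hP : ElemCompact P) : ElemCompact Q := by
  intro J f c hc g
  have h := hP J f c hc (e.hom ≫ g)
  have key : ∀ x ∈ AddSubgroup.closure {x : P ⟶ c.pt | ∃ (j : J) (h : P ⟶ f j), x = h ≫ c.inj j},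
      e.inv ≫ x ∈ AddSubgroup.closure
        {x : Q ⟶ c.pt | ∃ (j : J) (h : Q ⟶ f j), x = h ≫ c.inj j} := by
    intro x hx
    induction hx using AddSubgroup.closure_induction with
    | mem x hx =>
      obtain ⟨j, h, rfl⟩ := hx
      exact AddSubgroup.subset_closure ⟨j, e.inv ≫ h, by simp⟩
    | zero => simp
    | add x y _ _ hx hy => rw [Preadditive.comp_add]; exact add_mem hx hy
    | neg x _ hx => rw [Preadditive.comp_neg]; exact neg_mem hx
  simpa using key _ h

lemma ElemCompact.shift {P : T} (hP : ElemCompact P) (n : ℤ) : ElemCompact (P⟦n⟧) := by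
  intro J f c hc g
  let adj : shiftFunctor T n ⊣ shiftFunctor T (-n) := (shiftEquiv T n).toAdjunction
  have hc1 : IsColimit (Cofan.mk c.pt c.inj) :=
    IsColimit.ofIsoColimit hc (Cofan.ext (Iso.refl _) (by intro j; simp))
  have hc' := isColimitCofanMkObjOfIsColimit (shiftFunctor T (-n)) (f := f) c.inj hc1
  have h := hP J _ _ hc' (adj.homEquiv _ _ g)
  have key : ∀ x ∈ AddSubgroup.closure {x : P ⟶ c.pt⟦-n⟧ |
        ∃ (j : J) (h : P ⟶ (f j)⟦-n⟧), x = h ≫ (c.inj j)⟦-n⟧'},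
      (adj.homAddEquiv _ _).symm x ∈ AddSubgroup.closure
        {x : P⟦n⟧ ⟶ c.pt | ∃ (j : J) (h : P⟦n⟧ ⟶ f j), x = h ≫ c.inj j} := by
    intro x hx
    induction hx using AddSubgroup.closure_induction with
    | mem x hx =>
      obtain ⟨j, h, rfl⟩ := hx
      exact AddSubgroup.subset_closure ⟨j, (adj.homEquiv _ _).symm h,
        adj.homEquiv_naturality_right_symm h (c.inj j)⟩
    | zero => rw [map_zero]; exact zero_mem _
    | add x y _ _ hx hy => rw [map_add]; exact add_mem hx hy
    | neg x _ hx => rw [map_neg]; exact neg_mem hx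
  have := key _ h
  rw [Adjunction.homAddEquiv_symm_apply, Equiv.symm_apply_apply] at this
  exact this

open Classical in
/-- Projection from a coproduct. -/
noncomputable def proj {J : Type v} {f : J → T} {c : Cofan f} (hc : IsColimit c) (j : J) :
    c.pt ⟶ f j :=
  Cofan.IsColimit.desc hc (fun i => if h : i = j then eqToHom (by rw [h]) else 0)

lemma inj_proj_self {J : Type v} {f : J → T} {c : Cofan f} (hc : IsColimit c) (j : J) :
    c.inj j ≫ proj hc j = 𝟙 _ := by
  simp [proj]

lemma inj_proj_ne {J : Type v} {f : J → T} {c : Cofan f} (hc : IsColimit c) {i j : J}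
    (h : i ≠ j) : c.inj i ≫ proj hc j = 0 := by
  simp [proj, h]

lemma ElemCompact.eq_zero {P : T} (hP : ElemCompact P) {J : Type v} {f : J → T} {c : Cofan f}
    (hc : IsColimit c) (g : P ⟶ c.pt) (hg : ∀ j, g ≫ proj hc j = 0) : g = 0 := by
  classical
  have key : ∀ x ∈ AddSubgroup.closure {x : P ⟶ c.pt | ∃ (j : J) (h : P ⟶ f j), x = h ≫ c.inj j},
      ∃ s : Finset J, ∀ t, s ⊆ t → x = ∑ j ∈ t, x ≫ proj hc j ≫ c.inj j := by
    intro x hx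
    induction hx using AddSubgroup.closure_induction with
    | mem x hx =>
      obtain ⟨j, h, rfl⟩ := hx
      refine ⟨{j}, fun t ht => ?_⟩
      rw [Finset.sum_eq_single j]
      · rw [assoc, ← assoc (c.inj j), inj_proj_self, id_comp]
      · intro b _ hb
        rw [assoc, ← assoc (c.inj j), inj_proj_ne hc hb.symm, zero_comp, comp_zero]
      · intro h; exact absurd (ht (by simp)) h
    | zero => exact ⟨∅, by simp⟩
    | add x y _ _ hx hy =>
      obtain ⟨s, hs⟩ := hx
      obtain ⟨s', hs'⟩ := hy
      refine ⟨s ∪ s', fun t ht => ?_⟩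
      simp only [Preadditive.add_comp, Finset.sum_add_distrib]
      rw [← hs t (Finset.union_subset_left ht), ← hs' t (Finset.union_subset_right ht)]
    | neg x _ hx =>
      obtain ⟨s, hs⟩ := hx
      refine ⟨s, fun t ht => ?_⟩
      simp only [Preadditive.neg_comp, Finset.sum_neg_distrib]
      rw [← hs t ht]
  obtain ⟨s, hs⟩ := key g (hP J f c hc g)
  rw [hs s subset_rfl]
  refine Finset.sum_eq_zero fun j _ => ?_
  rw [← assoc, hg, zero_comp]

/-- Shifts of the generators. -/
def GenLike {ι : Type v} (G : ι → T) (P : T) : Prop :=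
  ∃ (i : ι) (n : ℤ), Nonempty ((G i)⟦n⟧ ≅ P)

lemma GenLike.shift {ι : Type v} {G : ι → T} {P : T} (h : GenLike G P) (m : ℤ) :
    GenLike G (P⟦m⟧) := by
  obtain ⟨i, n, ⟨e⟩⟩ := h
  exact ⟨i, n + m, ⟨(shiftFunctorAdd T n m).app (G i) ≪≫ (shiftFunctor T m).mapIso e⟩⟩

/-- `k` is injective on maps from shifts of generators. -/
def InjOn {ι : Type v} (G : ι → T) {A B : T} (k : A ⟶ B) : Prop :=
  ∀ P, GenLike G P → ∀ g : P ⟶ A, g ≫ k = 0 → g = 0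

lemma InjOn.shift {ι : Type v} {G : ι → T} {A B : T} {k : A ⟶ B} (h : InjOn G k) :
    InjOn G (k⟦(1 : ℤ)⟧') := by
  intro P hP g hg
  let adj : shiftFunctor T (-1 : ℤ) ⊣ shiftFunctor T (1 : ℤ) :=
    (shiftEquiv' T (-1 : ℤ) 1 (by simp)).toAdjunction
  have h1 : (adj.homEquiv _ _).symm g ≫ k = 0 := by
    rw [← adj.homEquiv_naturality_right_symm]
    rw [hg]
    exact map_zero (adj.homAddEquiv P B).symm
  have h2 := h _ (hP.shift (-1)) _ h1
  exact (adj.homAddEquiv P A).symm.map_eq_zero_iff.1 h2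

lemma IsTriangulatedSub.cone_mem {S : Set T} (hS : IsTriangulatedSub S) {Tr : Triangle T}
    (hT : Tr ∈ distTriang T) (h1 : Tr.obj₁ ∈ S) (h2 : Tr.obj₂ ∈ S) : Tr.obj₃ ∈ S :=
  hS.ext_mem _ (rot_of_distTriang _ hT) h2 (hS.shift_mem 1 h1)

/-- Coproduct of generators onto a class of maps. -/
lemma exists_cover [HasCoproducts.{v} T] {ι : Type v} (G : ι → T)
    {S : Set T} (hS : IsTriangulatedSub S) (hScoprod : CoproductClosed S)
    (hGS : ∀ i, G i ∈ S) {X Y : T} (p : X ⟶ Y) :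
    ∃ (K : T) (a : K ⟶ X), K ∈ S ∧ a ≫ p = 0 ∧
      ∀ P, GenLike G P → ∀ g : P ⟶ X, g ≫ p = 0 → ∃ b : P ⟶ K, b ≫ a = g := by
  let J := Σ (i : ι) (n : ULift.{v} ℤ), {g : (G i)⟦n.down⟧ ⟶ X // g ≫ p = 0}
  let F : J → T := fun j => (G j.1)⟦j.2.1.down⟧
  refine ⟨∐ F, Sigma.desc (fun j => j.2.2.1), ?_, ?_, ?_⟩
  · exact hScoprod J F (fun j => hS.shift_mem _ (hGS _)) _ (coproductIsCoproduct F)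
  · ext j
    simpa using j.2.2.2
  · rintro P ⟨i, n, ⟨e⟩⟩ g hg
    refine ⟨e.inv ≫ Sigma.ι F ⟨i, ⟨n⟩, e.hom ≫ g, by rw [assoc, hg, comp_zero]⟩, ?_⟩
    simp

lemma exists_next [HasCoproducts.{v} T] {ι : Type v} (G : ι → T)
    {S : Set T} (hS : IsTriangulatedSub S) (hScoprod : CoproductClosed S)
    (hGS : ∀ i, G i ∈ S) {X Y : T} (p : X ⟶ Y) (hX : X ∈ S) :
    ∃ (X' : T) (p' : X' ⟶ Y) (φ : X ⟶ X'), X' ∈ S ∧ φ ≫ p' = p ∧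
      ∀ P, GenLike G P → ∀ g : P ⟶ X, g ≫ p = 0 → g ≫ φ = 0 := by
  obtain ⟨K, a, hK, ha, hcov⟩ := exists_cover G hS hScoprod hGS p
  obtain ⟨X', φ, w, hT⟩ := distinguished_cocone_triangle a
  obtain ⟨p', hp'⟩ := Triangle.yoneda_exact₂ _ hT p ha
  refine ⟨X', p', φ, hS.cone_mem hT hK hX, hp'.symm, ?_⟩
  intro P hP g hg
  obtain ⟨b, rfl⟩ := hcov P hP g hg
  have : a ≫ φ = 0 := comp_distTriang_mor_zero₁₂ _ hT
  rw [assoc, this, comp_zero]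

/-- An object of `S` over `Y`. -/
structure Stage (S : Set T) (Y : T) where
  X : T
  p : X ⟶ Y
  mem : X ∈ S

/-- The homotopy colimit argument. -/
lemma tower_argument [HasCoproducts.{v} T] {ι : Type v} (G : ι → T)
    (hGc : ∀ P, GenLike G P → ElemCompact P)
    {S : Set T} (hS : IsTriangulatedSub S) (hScoprod : CoproductClosed S)
    {Y : T} (X : ℕ → T) (hX : ∀ n, X n ∈ S) (p : ∀ n, X n ⟶ Y) (φ : ∀ n, X n ⟶ X (n + 1))
    (hφ : ∀ n, φ n ≫ p (n + 1) = p n)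
    (hkill : ∀ n P, GenLike G P → ∀ g : P ⟶ X n, g ≫ p n = 0 → g ≫ φ n = 0) :
    ∃ (Z : T) (f : Z ⟶ Y) (i : X 0 ⟶ Z), Z ∈ S ∧ i ≫ f = p 0 ∧ InjOn G f := by
  let F : ULift.{v} ℕ → T := fun n => X n.down
  let c : Cofan F := Cofan.mk (∐ F) (Sigma.ι F)
  have hc : IsColimit c := coproductIsCoproduct F
  have hcS : c.pt ∈ S := hScoprod _ F (fun j => hX _) c hc
  let σ : c.pt ⟶ c.pt := Cofan.IsColimit.desc hc (fun n => φ n.down ≫ c.inj ⟨n.down + 1⟩)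
  have hσ : ∀ n : ℕ, c.inj ⟨n⟩ ≫ σ = φ n ≫ c.inj ⟨n + 1⟩ := fun n =>
    Cofan.IsColimit.fac hc _ _
  have hσ0 : σ ≫ proj hc ⟨0⟩ = 0 := by
    refine Cofan.IsColimit.hom_ext hc _ _ ?_
    rintro ⟨n⟩
    rw [← assoc, hσ, assoc, inj_proj_ne hc (by simp), comp_zero, comp_zero]
  have hσs : ∀ m, σ ≫ proj hc ⟨m + 1⟩ = proj hc ⟨m⟩ ≫ φ m := by
    intro m
    refine Cofan.IsColimit.hom_ext hc _ _ ?_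
    rintro ⟨n⟩
    rw [← assoc, hσ, assoc]
    by_cases h : n = m
    · subst h
      rw [inj_proj_self, ← assoc, inj_proj_self, id_comp, comp_id]
    · rw [inj_proj_ne hc (by simpa using h), ← assoc, inj_proj_ne hc (by simpa using h),
        comp_zero, zero_comp]
  have hinj : InjOn G (𝟙 c.pt - σ) := by
    intro P hP g hg
    rw [Preadditive.comp_sub, comp_id, sub_eq_zero] at hg
    refine (hGc P hP).eq_zero hc g ?_
    rintro ⟨n⟩
    induction n with
    | zero => rw [hg, assoc, hσ0, comp_zero]
    | succ n ih => rw [hg, assoc, hσs, ← assoc, ih, zero_comp]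
  obtain ⟨Z, u, w, hT⟩ := distinguished_cocone_triangle (𝟙 c.pt - σ)
  have hZ : Z ∈ S := hS.cone_mem hT hcS hcS
  have hu : c.pt ⟶ Z := u
  have hσu : σ ≫ u = u := by
    have : (𝟙 c.pt - σ) ≫ u = 0 := comp_distTriang_mor_zero₁₂ _ hT
    rw [Preadditive.sub_comp, id_comp, sub_eq_zero] at this
    exact this.symm
  let d : c.pt ⟶ Y := Cofan.IsColimit.desc hc (fun n => p n.down)
  have hd : ∀ n : ℕ, c.inj ⟨n⟩ ≫ d = p n := fun n => Cofan.IsColimit.fac hc _ _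
  have hσd : (𝟙 c.pt - σ) ≫ d = 0 := by
    rw [Preadditive.sub_comp, id_comp, sub_eq_zero]
    refine Cofan.IsColimit.hom_ext hc _ _ ?_
    rintro ⟨n⟩
    rw [← assoc, hσ, assoc, hd, hd, hφ]
  obtain ⟨f, hf⟩ : ∃ f : Z ⟶ Y, d = u ≫ f := Triangle.yoneda_exact₂ _ hT d hσd
  have hstep : ∀ n : ℕ, φ n ≫ c.inj ⟨n + 1⟩ ≫ u = c.inj ⟨n⟩ ≫ u := by
    intro n
    rw [← assoc, ← hσ, assoc, hσu]
  have hmove : ∀ (P : T) (k n : ℕ) (h : P ⟶ X n),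
      ∃ h' : P ⟶ X (n + k), h' ≫ c.inj ⟨n + k⟩ ≫ u = h ≫ c.inj ⟨n⟩ ≫ u := by
    intro P k n h
    induction k with
    | zero => exact ⟨h, rfl⟩
    | succ k ih =>
      obtain ⟨h', hh'⟩ := ih
      exact ⟨h' ≫ φ (n + k), by rw [← hh', assoc]; exact congrArg _ (hstep (n + k))⟩
  have hmove' : ∀ (P : T) (n m : ℕ) (_ : n ≤ m) (h : P ⟶ X n),
      ∃ h' : P ⟶ X m, h' ≫ c.inj ⟨m⟩ ≫ u = h ≫ c.inj ⟨n⟩ ≫ u := by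
    intro P n m hnm h
    obtain ⟨k, rfl⟩ := Nat.exists_eq_add_of_le hnm
    exact hmove P k n h
  refine ⟨Z, f, c.inj ⟨0⟩ ≫ u, hZ, by rw [assoc, ← hf, hd], ?_⟩
  intro P hP g hg
  have hgw : g ≫ w = 0 := by
    apply hinj.shift P hP
    have : w ≫ (𝟙 c.pt - σ)⟦(1 : ℤ)⟧' = 0 := comp_distTriang_mor_zero₃₁ _ hT
    rw [assoc, this, comp_zero]
  obtain ⟨g', hg'⟩ : ∃ g' : P ⟶ c.pt, g = g' ≫ u := Triangle.coyoneda_exact₃ _ hT g hgw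
  have key : ∀ x ∈ AddSubgroup.closure
      {x : P ⟶ c.pt | ∃ (j : ULift.{v} ℕ) (h : P ⟶ F j), x = h ≫ c.inj j},
      ∃ (n : ℕ) (h : P ⟶ X n), x ≫ u = h ≫ c.inj ⟨n⟩ ≫ u := by
    intro x hx
    induction hx using AddSubgroup.closure_induction with
    | mem x hx =>
      obtain ⟨⟨j⟩, h, rfl⟩ := hx
      exact ⟨j, h, by rw [assoc]⟩
    | zero => exact ⟨0, 0, by simp⟩
    | add x y _ _ hx hy =>
      obtain ⟨n, h, hh⟩ := hx
      obtain ⟨m, k, hk⟩ := hy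
      obtain ⟨h', hh'⟩ := hmove' P n (max n m) (le_max_left _ _) h
      obtain ⟨k', hk'⟩ := hmove' P m (max n m) (le_max_right _ _) k
      exact ⟨max n m, h' + k', by
        rw [Preadditive.add_comp, Preadditive.add_comp, hh, hk, hh', hk']⟩
    | neg x _ hx =>
      obtain ⟨n, h, hh⟩ := hx
      exact ⟨n, -h, by rw [Preadditive.neg_comp, Preadditive.neg_comp, hh]⟩
  obtain ⟨n, h, hh⟩ := key g' (hGc P hP _ F c hc g')
  rw [hg', hh] at hg ⊢
  have h0 : h ≫ p n = 0 := by
    rw [← hd, hf]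
    simpa using hg
  rw [← hstep, ← assoc, hkill n P hP h h0, zero_comp]

/-- a full coproduct-closed triangulated subcategory of a compactly
generated triangulated category containing a set of compact generators is the whole
category. -/
theorem devissage [HasCoproducts.{v} T]
    (ι : Type v) (G : ι → T) (hGc : ∀ i, IsCompactObj (G i))
    (hGgen : ∀ Y : T, (∀ (i : ι) (n : ℤ) (f : G i ⟶ Y⟦n⟧), f = 0) → IsZero Y)
    (S : Set T) (hS : IsTriangulatedSub S) (hScoprod : CoproductClosed S)
    (hGS : ∀ i, G i ∈ S) :
    S = Set.univ := by
  refine Set.eq_univ_of_forall fun Y => ?_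
  have hc : ∀ P, GenLike G P → ElemCompact P := by
    rintro P ⟨i, n, ⟨e⟩⟩
    exact ((hGc i).elem.shift n).of_iso e
  obtain ⟨X0, p0, hX0, -, hcov⟩ := exists_cover G hS hScoprod hGS (0 : Y ⟶ Y)
  have hnext : ∀ s : Stage S Y, ∃ (s' : Stage S Y) (φ : s.X ⟶ s'.X), φ ≫ s'.p = s.p ∧
      ∀ P, GenLike G P → ∀ g : P ⟶ s.X, g ≫ s.p = 0 → g ≫ φ = 0 := by
    intro s
    obtain ⟨X', p', φ, h1, h2, h3⟩ := exists_next G hS hScoprod hGS s.p s.mem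
    exact ⟨⟨X', p', h1⟩, φ, h2, h3⟩
  choose next φ hφ hkill using hnext
  let st : ℕ → Stage S Y := fun n => Nat.rec ⟨X0, p0, hX0⟩ (fun _ s => next s) n
  obtain ⟨Z, f, i, hZ, hi, hinj⟩ := tower_argument G hc hS hScoprod (fun n => (st n).X)
    (fun n => (st n).mem) (fun n => (st n).p) (fun n => φ (st n)) (fun n => hφ (st n))
    (fun n => hkill (st n))
  obtain ⟨C, a, b, hT⟩ := distinguished_cocone_triangle f
  have hC : ∀ P, GenLike G P → ∀ q : P ⟶ C, q = 0 := by
    intro P hP q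
    have hb : q ≫ b = 0 := by
      apply hinj.shift P hP
      have : b ≫ f⟦(1 : ℤ)⟧' = 0 := comp_distTriang_mor_zero₃₁ _ hT
      rw [assoc, this, comp_zero]
    obtain ⟨r, hr⟩ : ∃ r : P ⟶ Y, q = r ≫ a := Triangle.coyoneda_exact₃ _ hT q hb
    obtain ⟨t, ht⟩ := hcov P hP r comp_zero
    have hfa : f ≫ a = 0 := comp_distTriang_mor_zero₁₂ _ hT
    have hi' : i ≫ f = p0 := hi
    rw [hr, ← ht, ← hi', assoc, assoc, hfa, comp_zero, comp_zero]
  have hC0 : IsZero C := by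
    refine hGgen C fun i n g => ?_
    let adj : shiftFunctor T (-n) ⊣ shiftFunctor T n := (shiftEquiv' T (-n) n (by simp)).toAdjunction
    have h0 := hC ((G i)⟦-n⟧) ⟨i, -n, ⟨Iso.refl _⟩⟩ ((adj.homEquiv _ _).symm g)
    exact (adj.homAddEquiv (G i) C).symm.map_eq_zero_iff.1 h0
  have : IsIso f := (Triangle.isZero₃_iff_isIso₁ _ hT).1 hC0
  exact hS.iso_mem (asIso f) hZ

end LadderFormalization
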